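/- arXiv:1606.01914 — 6 statements merged into one kernel-verified Lean document; each statement's English description precedes it below -/
import Mathlib

section
/- Let N ≥ 2. For every Dynkin label λ : {1, …, N−1} → ℕ and every index i ∈ {1, …, N−1}, adding 1 to the i-th component increases the quadratic Casimir eigenvalue by at least (N²−1)/(2N²): c₂(λ + e_i) − c₂(λ) ≥ (N²−1)/(2N²). -/
/-! Write `k = i + 1` and let `B` be the inverse Cartan matrix. Since `B` is symmetric, expanding the
quadratic form gives
`2N (c₂(λ + e_i) - c₂(λ)) = 2 ∑_j B_{ij} λ_j + 2 ∑_j B_{ji} + B_{ii}`.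
The first sum is nonnegative because `B` has nonnegative entries. The column sum of `B` is
`k (N - k) / 2` and `B_{ii} = k (N - k) / N`, so the right-hand side is at least
`k (N - k) (N + 1) / N`, and `k (N - k) ≥ N - 1` for `1 ≤ k ≤ N - 1`.
-/

open Matrix Finset

/-- The inverse Cartan matrix of su(N): B_{ij} = i(N−j)/N if i ≤ j and
B_{ij} = j(N−i)/N if i > j, where indices run over {1,…,N−1}
(`i : Fin (N-1)` corresponds to the label `i+1`). -/
noncomputable def invCartanMatrix (N : ℕ) : Matrix (Fin (N - 1)) (Fin (N - 1)) ℝ :=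
  Matrix.of fun i j =>
    if (i : ℕ) ≤ (j : ℕ) then ((i : ℕ) + 1 : ℝ) * ((N : ℝ) - ((j : ℕ) + 1)) / N
    else ((j : ℕ) + 1 : ℝ) * ((N : ℝ) - ((i : ℕ) + 1)) / N

/-- The quadratic Casimir eigenvalue of the irreducible su(N) representation with
Dynkin label λ : {1,…,N−1} → ℕ:  c₂(λ) = (1/(2N)) Σ_{i,j} (λ_i + 2) B_{ij} λ_j,
where B is the inverse Cartan matrix. -/
noncomputable def casimirEigenvalue (N : ℕ) (lam : Fin (N - 1) → ℕ) : ℝ :=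
  (1 / (2 * (N : ℝ))) *
    ∑ i, ∑ j, ((lam i : ℝ) + 2) * invCartanMatrix N i j * (lam j : ℝ)

lemma invCartanMatrix_nonneg (N : ℕ) (i j : Fin (N - 1)) : 0 ≤ invCartanMatrix N i j := by
  have hi : ((i : ℕ) : ℝ) + 1 ≤ N := by exact_mod_cast (by have := i.2; omega : (i : ℕ) + 1 ≤ N)
  have hj : ((j : ℕ) : ℝ) + 1 ≤ N := by exact_mod_cast (by have := j.2; omega : (j : ℕ) + 1 ≤ N)
  simp only [invCartanMatrix, Matrix.of_apply]
  split_ifs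
  · exact div_nonneg (mul_nonneg (by positivity) (by linarith)) (by positivity)
  · exact div_nonneg (mul_nonneg (by positivity) (by linarith)) (by positivity)

lemma invCartanMatrix_comm (N : ℕ) (i j : Fin (N - 1)) :
    invCartanMatrix N i j = invCartanMatrix N j i := by
  simp only [invCartanMatrix, Matrix.of_apply]
  rcases lt_trichotomy (i : ℕ) (j : ℕ) with h | h | h
  · rw [if_pos h.le, if_neg (by omega)]
  · simp [h]
  · rw [if_neg (by omega), if_pos h.le]

/-- Partial column sums of the inverse Cartan matrix, without the factor `1 / N`. The two
expressions agree at `n = i + 1`. -/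
lemma sum_range_invCartan (M : ℝ) (i n : ℕ) :
    ∑ j ∈ Finset.range n, (if j ≤ i then ((j : ℝ) + 1) * (M - ((i : ℝ) + 1))
      else ((i : ℝ) + 1) * (M - ((j : ℝ) + 1))) =
    if n ≤ i + 1 then (n : ℝ) * (n + 1) / 2 * (M - (i + 1))
      else M * ((i : ℝ) + 1) * (M - (i + 1)) / 2 - ((i : ℝ) + 1) * (M - n) * (M - n - 1) / 2 := by
  induction n with
  | zero => simp
  | succ n ih =>
    rw [Finset.sum_range_succ, ih]
    rcases lt_trichotomy n (i + 1) with h | h | h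
    · rw [if_pos (by omega), if_pos (by omega), if_pos (by omega)]
      push_cast
      ring
    · rw [if_pos (by omega), if_neg (by omega), if_neg (by omega)]
      subst h
      push_cast
      ring
    · rw [if_neg (by omega), if_neg (by omega), if_neg (by omega)]
      push_cast
      ring

lemma sum_invCartanMatrix_col (N : ℕ) (i : Fin (N - 1)) :
    ∑ j, invCartanMatrix N j i = ((i : ℕ) + 1 : ℝ) * ((N : ℝ) - ((i : ℕ) + 1)) / 2 := by
  have hi := i.2
  have hN : (N : ℝ) ≠ 0 := by exact_mod_cast (by omega : N ≠ 0)
  have hcast : ((N - 1 : ℕ) : ℝ) = (N : ℝ) - 1 := by rw [Nat.cast_sub (by omega)]; simp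
  have h := sum_range_invCartan (N : ℝ) i (N - 1)
  rw [Finset.sum_range] at h
  simp only [invCartanMatrix, Matrix.of_apply, ← ite_div]
  rw [← Finset.sum_div, h, hcast]
  split_ifs with hlast
  -- here `i` is the last index, `N = i + 2`
  · have : (N : ℝ) = (i : ℕ) + 2 := by exact_mod_cast (by omega : N = (i : ℕ) + 2)
    rw [this] at hN ⊢
    field_simp
    ring
  · field_simp
    ring

/-- The polarization of the Casimir quadratic form in the direction of a basis label. -/
lemma casimirEigenvalue_add_single_sub (N : ℕ) (lam : Fin (N - 1) → ℕ) (i : Fin (N - 1)) :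
    casimirEigenvalue N (fun j => lam j + if j = i then 1 else 0) - casimirEigenvalue N lam =
      1 / (2 * (N : ℝ)) * (2 * ∑ j, invCartanMatrix N i j * lam j +
        2 * ∑ j, invCartanMatrix N j i + invCartanMatrix N i i) := by
  have hsymm : ∑ j, (lam j : ℝ) * invCartanMatrix N j i = ∑ j, invCartanMatrix N i j * lam j :=
    Finset.sum_congr rfl fun j _ => by rw [invCartanMatrix_comm N j i, mul_comm]
  unfold casimirEigenvalue
  rw [← mul_sub]
  congr 1
  push_cast
  simp only [add_mul, mul_add, Finset.sum_add_distrib, ite_mul, mul_ite, mul_one, mul_zero,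
    one_mul, zero_mul, Finset.sum_ite_eq', Finset.sum_ite_irrel, Finset.sum_const_zero,
    Finset.mem_univ, if_true, ← Finset.mul_sum, hsymm]
  ring

/-- Adding 1 to any component of a Dynkin label increases the quadratic Casimir
eigenvalue by at least (N²−1)/(2N²). -/
theorem casimirEigenvalue_add_single (N : ℕ) (hN : 2 ≤ N)
    (lam : Fin (N - 1) → ℕ) (i : Fin (N - 1)) :
    casimirEigenvalue N (fun j => lam j + if j = i then 1 else 0)
      - casimirEigenvalue N lam ≥ ((N : ℝ) ^ 2 - 1) / (2 * (N : ℝ) ^ 2) := by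
  have hi := i.2
  have hNpos : (0 : ℝ) < N := by exact_mod_cast (by omega : 0 < N)
  have hk : (0 : ℝ) ≤ (i : ℕ) := by positivity
  have hkN : ((i : ℕ) : ℝ) + 2 ≤ N := by exact_mod_cast (by omega : (i : ℕ) + 2 ≤ N)
  have hpos : 0 ≤ ∑ j, invCartanMatrix N i j * (lam j : ℝ) :=
    Finset.sum_nonneg fun j _ => mul_nonneg (invCartanMatrix_nonneg N i j) (by positivity)
  have hdiag : invCartanMatrix N i i = ((i : ℕ) + 1 : ℝ) * ((N : ℝ) - ((i : ℕ) + 1)) / N := by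
    simp [invCartanMatrix]
  -- `k (N - k) - (N - 1) = (k - 1) (N - k - 1)` with `k = i + 1`
  have hmin : (N : ℝ) - 1 ≤ ((i : ℕ) + 1 : ℝ) * ((N : ℝ) - ((i : ℕ) + 1)) := by
    nlinarith [mul_nonneg hk (sub_nonneg.2 hkN)]
  rw [casimirEigenvalue_add_single_sub, sum_invCartanMatrix_col, hdiag, ge_iff_le]
  set c : ℝ := ((i : ℕ) + 1 : ℝ) * ((N : ℝ) - ((i : ℕ) + 1))
  calc ((N : ℝ) ^ 2 - 1) / (2 * (N : ℝ) ^ 2)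
      = 1 / (2 * (N : ℝ)) * (((N : ℝ) - 1) + ((N : ℝ) - 1) / N) := by field_simp; ring
    _ ≤ 1 / (2 * (N : ℝ)) * (c + c / N) := by gcongr
    _ ≤ _ := by
      gcongr
      linarith
end

section
/- Let N ≥ 2 and 1 ≤ α ≤ N−1. The Dynkin label 2e_α (a single entry equal to 2 at position α, zeros elsewhere) has quadratic Casimir eigenvalue c₂(2e_α) = ((N+2)/N²) · α(N−α). Consequently, for N > 2 one has c₂(2e_α) ≥ 1 + (N−2)/N² > 1. -/
/-!
Only the column `α` of the inverse Cartan matrix `B` contributes to `c₂(2e_α)`. With `a` the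
position of the nonzero entry, the diagonal entry is `B_{aa} = a(N-a)/N`, and the column sum is
`∑ i, B_{ia} = a(N-a)/2` (the pairing of the Weyl vector with a fundamental weight), obtained by
summing two arithmetic progressions. Hence
`c₂(2e_α) = (1/(2N)) (4 B_{aa} + 4 ∑ i, B_{ia}) = ((N+2)/N²) a(N-a)`.
The lower bound follows from `a(N-a) - (N-1) = (a-1)(N-1-a) ≥ 0` and
`(N+2)(N-1) = N² + (N-2)`.
-/

open Matrix Finset

lemma sum_range_succ_cast (m : ℕ) :
    ∑ i ∈ range m, ((i : ℝ) + 1) = (m : ℝ) * (m + 1) / 2 := by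
  induction m with
  | zero => simp
  | succ k ih => rw [sum_range_succ, ih]; push_cast; ring

/-- Partial sums of column `a` (counted from `0`) of `N • B` that go past the diagonal, with
`x` standing for `N`. The number of terms `m` is independent of `x` so that induction on `m`
applies. -/
lemma sum_range_column (x : ℝ) (a m : ℕ) (h : a + 1 ≤ m) :
    ∑ i ∈ range m, (if i ≤ a then ((i : ℝ) + 1) * (x - (a + 1)) else ((a : ℝ) + 1) * (x - (i + 1)))
      = ((a : ℝ) + 1) * (((a : ℝ) + 2) / 2 * (x - (a + 1))
        + ((m - a - 1) * (x - 1) - (m * (m - 1) - a * (a + 1)) / 2)) := by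
  induction m, h using Nat.le_induction with
  | base =>
    have hc : ∀ i ∈ range (a + 1),
        (if i ≤ a then ((i : ℝ) + 1) * (x - (a + 1)) else ((a : ℝ) + 1) * (x - (i + 1)))
          = ((i : ℝ) + 1) * (x - (a + 1)) := fun i hi =>
      if_pos (Nat.lt_succ_iff.mp (mem_range.mp hi))
    rw [sum_congr rfl hc, ← sum_mul, sum_range_succ_cast]
    push_cast
    ring
  | succ k hk ih =>
    rw [sum_range_succ, ih, if_neg (by omega)]
    push_cast
    ring

lemma sum_invCartanMatrix_column (N : ℕ) (hN : 2 ≤ N) (α : Fin (N - 1)) :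
    ∑ i, invCartanMatrix N i α = ((α : ℕ) + 1 : ℝ) * ((N : ℝ) - ((α : ℕ) + 1)) / 2 := by
  have hN0 : (N : ℝ) ≠ 0 := by positivity
  have hα : (α : ℕ) + 1 ≤ N - 1 := α.isLt
  have hs := sum_range_column N α (N - 1) hα
  rw [← Fin.sum_univ_eq_sum_range (fun i : ℕ => if i ≤ (α : ℕ)
    then ((i : ℝ) + 1) * ((N : ℝ) - ((α : ℕ) + 1))
    else (((α : ℕ) : ℝ) + 1) * ((N : ℝ) - (i + 1)))] at hs
  simp only [invCartanMatrix, Matrix.of_apply, ← ite_div]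
  rw [← sum_div, hs, Nat.cast_sub (by omega)]
  field_simp
  push_cast
  ring

/-- Only column `α` of the double sum survives, and only its diagonal entry is weighted by
`λ_α + 2 = 4` instead of `2`. -/
lemma casimirEigenvalue_two_at_eq (N : ℕ) (hN : 2 ≤ N) (α : Fin (N - 1)) :
    casimirEigenvalue N (fun j => if j = α then 2 else 0)
      = (((N : ℝ) + 2) / (N : ℝ) ^ 2) * (((α : ℕ) + 1) * ((N : ℝ) - ((α : ℕ) + 1))) := by
  have hN0 : (N : ℝ) ≠ 0 := by positivity
  have hd : invCartanMatrix N α α = ((α : ℕ) + 1 : ℝ) * ((N : ℝ) - ((α : ℕ) + 1)) / N := by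
    simp [invCartanMatrix]
  have key : ∑ i, ∑ j, (((if i = α then 2 else 0 : ℕ) : ℝ) + 2) * invCartanMatrix N i j
      * ((if j = α then 2 else 0 : ℕ) : ℝ)
      = 4 * invCartanMatrix N α α + 4 * ∑ i, invCartanMatrix N i α := by
    simp only [Nat.cast_ite, Nat.cast_ofNat, Nat.cast_zero, mul_ite, mul_zero, sum_ite_eq',
      mem_univ, if_true, add_mul, ite_mul, zero_mul, sum_add_distrib, mul_sum]
    congr 1
    · ring
    · exact sum_congr rfl fun i _ => by ring
  rw [casimirEigenvalue, key, sum_invCartanMatrix_column N hN, hd]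
  field_simp
  ring

/-- The Dynkin label 2e_α (a single entry 2 at position α ∈ {1,…,N−1}) has quadratic
Casimir eigenvalue ((N+2)/N²)·α(N−α); consequently for N > 2 it is at least
1 + (N−2)/N², which is strictly greater than 1. -/
theorem casimirEigenvalue_two_at (N : ℕ) (hN : 2 ≤ N) (α : Fin (N - 1)) :
    casimirEigenvalue N (fun j => if j = α then 2 else 0)
      = (((N : ℝ) + 2) / (N : ℝ) ^ 2) * (((α : ℕ) + 1) * ((N : ℝ) - ((α : ℕ) + 1))) ∧
    (2 < N →
      casimirEigenvalue N (fun j => if j = α then 2 else 0)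
        ≥ 1 + ((N : ℝ) - 2) / (N : ℝ) ^ 2 ∧
      1 < casimirEigenvalue N (fun j => if j = α then 2 else 0)) := by
  rw [casimirEigenvalue_two_at_eq N hN α]
  refine ⟨rfl, fun h2 => ?_⟩
  have hN2 : (2 : ℝ) < N := by exact_mod_cast h2
  have hN0 : (0 : ℝ) < (N : ℝ) ^ 2 := by positivity
  have ha : ((α : ℕ) : ℝ) + 2 ≤ N := by
    have := α.isLt
    exact_mod_cast (by omega : (α : ℕ) + 2 ≤ N)
  have ha0 : (0 : ℝ) ≤ ((α : ℕ) : ℝ) := Nat.cast_nonneg _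
  have hprod : (N : ℝ) - 1 ≤ ((α : ℕ) + 1) * ((N : ℝ) - ((α : ℕ) + 1)) := by
    nlinarith [mul_nonneg ha0 (sub_nonneg.mpr ha)]
  have hge : 1 + ((N : ℝ) - 2) / (N : ℝ) ^ 2
      ≤ (((N : ℝ) + 2) / (N : ℝ) ^ 2) * (((α : ℕ) + 1) * ((N : ℝ) - ((α : ℕ) + 1))) := by
    calc 1 + ((N : ℝ) - 2) / (N : ℝ) ^ 2
        = (((N : ℝ) + 2) / (N : ℝ) ^ 2) * ((N : ℝ) - 1) := by field_simp; ring
      _ ≤ _ := mul_le_mul_of_nonneg_left hprod (by positivity)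
  exact ⟨hge, lt_of_lt_of_le (lt_add_of_pos_right 1 (div_pos (sub_pos.mpr hN2) hN0)) hge⟩
end

section
/- Let n ≥ 2 be an integer and Δt ∈ ℝ. Define the zero-chain transition kernel P on the state space {1, 2, …, n} by: P(ℓ, ℓ) = 1 − 16ℓ(3n−2ℓ−1)Δt/(n(n−1)); P(ℓ, ℓ−1) = 16ℓ(ℓ−1)Δt/(n(n−1)) for ℓ ≥ 2; P(ℓ, ℓ+1) = 48ℓ(n−ℓ)Δt/(n(n−1)) for ℓ ≤ n−1; and P(ℓ, k) = 0 whenever |ℓ−k| ≥ 2. Then the distribution ω₀(k) = 3ᵏ·C(n,k)/(4ⁿ − 1) is stationary for P: for every k ∈ {1, …, n}, Σ_{ℓ=1}^{n} ω₀(ℓ) P(ℓ, k) = ω₀(k). -/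
/-!
The chain is a birth–death chain, and it is reversible with respect to `ω₀`: since
`(k + 1) C(n, k + 1) = (n - k) C(n, k)`, the weights satisfy
`(k + 1) ω₀(k + 1) = 3 (n - k) ω₀(k)`, which is exactly detailed balance
`ω₀(ℓ) P(ℓ, k) = ω₀(k) P(k, ℓ)` across the edge `{k, k + 1}`. Moreover each row of `P` sums to `1`
over `{1, …, n}`, because the rates out of the state space, `1 → 0` and `n → n + 1`, vanish.
Summing detailed balance over `ℓ` gives stationarity.
-/

open Finset

/-- The zero-chain transition kernel on the state space {1,…,n} induced by one time
step Δt of the stochastic local Hamiltonian evolution: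
P(ℓ,ℓ) = 1 − 16ℓ(3n−2ℓ−1)Δt/(n(n−1)), P(ℓ,ℓ−1) = 16ℓ(ℓ−1)Δt/(n(n−1)),
P(ℓ,ℓ+1) = 48ℓ(n−ℓ)Δt/(n(n−1)), and P(ℓ,k) = 0 otherwise (|ℓ−k| ≥ 2). -/
noncomputable def zeroChainP (n : ℕ) (Δt : ℝ) (ℓ k : ℕ) : ℝ :=
  if k = ℓ then
    1 - 16 * (ℓ : ℝ) * (3 * (n : ℝ) - 2 * (ℓ : ℝ) - 1) * Δt / ((n : ℝ) * ((n : ℝ) - 1))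
  else if k + 1 = ℓ then
    16 * (ℓ : ℝ) * ((ℓ : ℝ) - 1) * Δt / ((n : ℝ) * ((n : ℝ) - 1))
  else if k = ℓ + 1 then
    48 * (ℓ : ℝ) * ((n : ℝ) - (ℓ : ℝ)) * Δt / ((n : ℝ) * ((n : ℝ) - 1))
  else 0

/-- The stationary distribution of the zero chain: ω₀(k) = 3ᵏ C(n,k)/(4ⁿ − 1). -/
noncomputable def zeroChainStat (n k : ℕ) : ℝ :=
  3 ^ k * (n.choose k : ℝ) / (4 ^ n - 1)

theorem zeroChainStat_succ (n k : ℕ) :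
    zeroChainStat n (k + 1) * ((k : ℝ) + 1) = 3 * zeroChainStat n k * ((n : ℝ) - k) := by
  have h : (n.choose (k + 1) : ℝ) * ((k : ℝ) + 1) = n.choose k * ((n : ℝ) - k) := by
    rcases le_or_gt k n with hk | hk
    · have := Nat.choose_succ_right_eq n k
      rw [← Nat.cast_sub hk]
      exact_mod_cast this
    · simp [Nat.choose_eq_zero_of_lt hk, Nat.choose_eq_zero_of_lt (Nat.lt_succ_of_lt hk)]
  unfold zeroChainStat
  linear_combination (3 ^ (k + 1) / (4 ^ n - 1) : ℝ) * h

/-- Detailed balance across the edge `{k, k + 1}`. -/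
theorem zeroChain_balance_succ (n : ℕ) (Δt : ℝ) (k : ℕ) :
    zeroChainStat n (k + 1) * zeroChainP n Δt (k + 1) k =
      zeroChainStat n k * zeroChainP n Δt k (k + 1) := by
  have h := zeroChainStat_succ n k
  have h1 : ¬ k + 1 + 1 = k := by omega
  simp only [zeroChainP, left_eq_add, one_ne_zero, if_false, if_true, Nat.add_eq_left, h1]
  push_cast
  linear_combination (16 * (k : ℝ) * Δt / ((n : ℝ) * ((n : ℝ) - 1))) * h

/-- Detailed balance (reversibility) of the zero chain. -/
theorem zeroChain_balance (n : ℕ) (Δt : ℝ) (ℓ k : ℕ) :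
    zeroChainStat n ℓ * zeroChainP n Δt ℓ k = zeroChainStat n k * zeroChainP n Δt k ℓ := by
  by_cases h0 : k = ℓ
  · rw [h0]
  by_cases h1 : k + 1 = ℓ
  · subst h1
    exact zeroChain_balance_succ n Δt k
  by_cases h2 : k = ℓ + 1
  · subst h2
    exact (zeroChain_balance_succ n Δt ℓ).symm
  · simp [zeroChainP, h0, h1, h2, Ne.symm h0, Ne.symm h1, Ne.symm h2]

/-- Each row of the kernel sums to `1` over the state space. -/
theorem zeroChainP_row_sum (n : ℕ) (Δt : ℝ) {k : ℕ} (hk : k ∈ Finset.Icc 1 n) :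
    ∑ ℓ ∈ Finset.Icc 1 n, zeroChainP n Δt k ℓ = 1 := by
  obtain ⟨hk1, hkn⟩ := Finset.mem_Icc.mp hk
  obtain ⟨m, rfl⟩ : ∃ m, k = m + 1 := ⟨k - 1, by omega⟩
  have hP : ∀ ℓ, zeroChainP n Δt (m + 1) ℓ =
      (if ℓ = m + 1 then zeroChainP n Δt (m + 1) (m + 1) else 0) +
      (if ℓ = m then zeroChainP n Δt (m + 1) m else 0) +
      (if ℓ = m + 2 then zeroChainP n Δt (m + 1) (m + 2) else 0) := by
    intro ℓ
    by_cases h0 : ℓ = m + 1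
    · subst h0; simp
    by_cases h1 : ℓ = m
    · subst h1; simp
    by_cases h2 : ℓ = m + 2
    · subst h2; simp
    · simp [zeroChainP, h0, h1, h2]
  -- The rates leaving the state space vanish, so the boundary cases need no separate treatment.
  have hlow : (if m ∈ Finset.Icc 1 n then zeroChainP n Δt (m + 1) m else 0) =
      zeroChainP n Δt (m + 1) m := by
    split_ifs with h
    · rfl
    · have : m = 0 := by rw [Finset.mem_Icc] at h; omega
      subst this
      simp [zeroChainP]
  have hhigh : (if m + 2 ∈ Finset.Icc 1 n then zeroChainP n Δt (m + 1) (m + 2) else 0) =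
      zeroChainP n Δt (m + 1) (m + 2) := by
    split_ifs with h
    · rfl
    · have : n = m + 1 := by rw [Finset.mem_Icc] at h; omega
      subst this
      simp [zeroChainP]
  rw [Finset.sum_congr rfl fun ℓ _ => hP ℓ, Finset.sum_add_distrib, Finset.sum_add_distrib,
    Finset.sum_ite_eq', Finset.sum_ite_eq', Finset.sum_ite_eq', if_pos hk, hlow, hhigh]
  have e1 : ¬ m = m + 1 := by omega
  have e2 : ¬ m + 2 = m + 1 := by omega
  have e3 : ¬ m + 2 + 1 = m + 1 := by omega
  simp only [zeroChainP, e1, e2, e3, if_true, if_false]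
  push_cast
  ring

/-- The distribution ω₀(k) = 3ᵏ C(n,k)/(4ⁿ−1) is stationary for the zero-chain
transition kernel: for every k ∈ {1,…,n}, Σ_{ℓ=1}^{n} ω₀(ℓ) P(ℓ,k) = ω₀(k). -/
theorem zeroChainStat_stationary (n : ℕ) (hn : 2 ≤ n) (Δt : ℝ) :
    ∀ k ∈ Finset.Icc 1 n,
      ∑ ℓ ∈ Finset.Icc 1 n, zeroChainStat n ℓ * zeroChainP n Δt ℓ k = zeroChainStat n k := by
  intro k hk
  rw [Finset.sum_congr rfl fun ℓ _ => zeroChain_balance n Δt ℓ k, ← Finset.mul_sum,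
    zeroChainP_row_sum n Δt hk, mul_one]
end

section
/- Let σ₀ = I₂, σ₁, σ₂, σ₃ be the 2×2 Pauli matrices. For α, β ∈ {0,1,2,3} set P_{αβ} = σ_α ⊗ σ_β ∈ M₄(ℂ) (Kronecker product) and Q_{αβ} = P_{αβ} ⊗ I₄ + I₄ ⊗ P_{αβ} ∈ M₁₆(ℂ). Define the linear map T : M₁₆(ℂ) → M₁₆(ℂ) by T(Z) = −(1/2) Σ_{α,β=0}^{3} [Q_{αβ}, [Q_{αβ}, Z]], and set F = Σ_{(γ₁,γ₂) ≠ (0,0)} P_{γ₁γ₂} ⊗ P_{γ₁γ₂} ∈ M₁₆(ℂ). Then: (i) T(I₁₆) = 0; (ii) T(F) = 0; (iii) for every Z ∈ M₁₆(ℂ) with Tr(Z) = 0 and Tr(F·Z) = 0, one has Re Tr(Zᴴ T(Z)) ≤ −16 · Tr(Zᴴ Z). In other words, the generator of the local two-qubit second moment operator has spectral gap at least 16 above its two-dimensional invariant subspace spanned by I₁₆ and F. -/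
/-!
Write `S` for the swap of the two copies of `ℂ⁴`. Completeness of the Pauli basis,
`∑ a, (P a) i j * (P a) k l = 4` if `i = l`, `j = k` and `0` otherwise, gives `∑ a, P a ⊗ P a = 4 S`
(so `F = 4 S - 1`) and turns `∑ a, (1 ⊗ P a) Z (1 ⊗ P a)` into `4 (tr₂ Z ⊗ 1)`, where `tr₂` is the
partial trace. Every `Q a` commutes with `S`, hence with `F`, which gives the two kernel vectors.

For the gap, `genT` commutes with left and with right multiplication by `S`, so the quadratic form
splits orthogonally over the four joint eigenspaces `S Y = s Y`, `Y S = t Y` with `s, t = ±1`.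
The conditions on `Z` say that `Z` is orthogonal to `1` and `S`, so each component `Y` is traceless.
On such a component the form is explicit in terms of `‖Y‖²` and `‖tr₂ Y‖²`, and the required
inequality is `4 ‖tr₂ Y‖² ≤ (4 + s + t) ‖Y‖²`. It expresses that a square is nonnegative: the
squared norm of `(4 + s + t) Y` minus four times the projection of `tr₂ Y ⊗ 1` (`genT_block`).
-/

open Matrix Kronecker Finset

/-- The 2×2 Pauli matrices σ₀ = I, σ₁, σ₂, σ₃. -/
noncomputable def pauli : Fin 4 → Matrix (Fin 2) (Fin 2) ℂ
  | 0 => !![1, 0; 0, 1]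
  | 1 => !![0, 1; 1, 0]
  | 2 => !![0, -Complex.I; Complex.I, 0]
  | 3 => !![1, 0; 0, -1]

/-- The two-qubit Pauli string P_{αβ} = σ_α ⊗ σ_β ∈ M₄(ℂ). -/
noncomputable def pauliP (a : Fin 4 × Fin 4) : Matrix (Fin 2 × Fin 2) (Fin 2 × Fin 2) ℂ :=
  pauli a.1 ⊗ₖ pauli a.2

/-- Q_{αβ} = P_{αβ} ⊗ I₄ + I₄ ⊗ P_{αβ} ∈ M₁₆(ℂ). -/
noncomputable def pauliQ (a : Fin 4 × Fin 4) :
    Matrix ((Fin 2 × Fin 2) × (Fin 2 × Fin 2)) ((Fin 2 × Fin 2) × (Fin 2 × Fin 2)) ℂ :=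
  pauliP a ⊗ₖ (1 : Matrix (Fin 2 × Fin 2) (Fin 2 × Fin 2) ℂ) +
    (1 : Matrix (Fin 2 × Fin 2) (Fin 2 × Fin 2) ℂ) ⊗ₖ pauliP a

/-- The generator of the local two-qubit second moment operator:
T(Z) = −(1/2) Σ_{α,β} [Q_{αβ}, [Q_{αβ}, Z]]. -/
noncomputable def genT
    (Z : Matrix ((Fin 2 × Fin 2) × (Fin 2 × Fin 2)) ((Fin 2 × Fin 2) × (Fin 2 × Fin 2)) ℂ) :
    Matrix ((Fin 2 × Fin 2) × (Fin 2 × Fin 2)) ((Fin 2 × Fin 2) × (Fin 2 × Fin 2)) ℂ :=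
  (-(1 / 2) : ℂ) • ∑ a : Fin 4 × Fin 4,
    (pauliQ a * (pauliQ a * Z - Z * pauliQ a) - (pauliQ a * Z - Z * pauliQ a) * pauliQ a)

/-- F = Σ_{(γ₁,γ₂) ≠ (0,0)} P_{γ₁γ₂} ⊗ P_{γ₁γ₂} ∈ M₁₆(ℂ). -/
noncomputable def pauliF :
    Matrix ((Fin 2 × Fin 2) × (Fin 2 × Fin 2)) ((Fin 2 × Fin 2) × (Fin 2 × Fin 2)) ℂ :=
  ∑ a ∈ Finset.univ.filter (fun a : Fin 4 × Fin 4 => a ≠ ((0 : Fin 4), (0 : Fin 4))),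
    pauliP a ⊗ₖ pauliP a

/-! ### The swap operator and the partial trace -/

/-- The swap operator on `ℂⁿ ⊗ ℂⁿ`, exchanging the two tensor factors. -/
def swapM (n : Type*) [DecidableEq n] : Matrix (n × n) (n × n) ℂ :=
  Matrix.of fun i j => if i.1 = j.2 ∧ i.2 = j.1 then 1 else 0

/-- The partial trace over the second tensor factor. -/
def ptrace {n : Type*} [Fintype n] (Z : Matrix (n × n) (n × n) ℂ) : Matrix n n ℂ :=
  Matrix.of fun i k => ∑ j, Z (i, j) (k, j)

lemma swapM_conjTranspose {n : Type*} [DecidableEq n] : (swapM n)ᴴ = swapM n := by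
  ext i k
  simp only [swapM, Matrix.conjTranspose_apply, Matrix.of_apply, apply_ite star, star_one,
    star_zero, eq_comm, and_comm]

lemma trace_ptrace {n : Type*} [Fintype n] (Z : Matrix (n × n) (n × n) ℂ) :
    (ptrace Z).trace = Z.trace := by
  simp [Matrix.trace, ptrace, Fintype.sum_prod_type]

section Swap

variable {n : Type*} [Fintype n] [DecidableEq n]

lemma one_kronecker_mul_apply (A : Matrix n n ℂ) (Z : Matrix (n × n) (n × n) ℂ) (i j : n)
    (k : n × n) : (((1 : Matrix n n ℂ) ⊗ₖ A) * Z) (i, j) k = ∑ x, A j x * Z (i, x) k := by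
  rw [Matrix.mul_apply, Fintype.sum_prod_type, Finset.sum_eq_single i]
  · simp
  · intro b _ hb
    simp [Matrix.one_apply_ne hb.symm]
  · simp

lemma mul_one_kronecker_apply (A : Matrix n n ℂ) (Z : Matrix (n × n) (n × n) ℂ) (i : n × n)
    (k l : n) : (Z * ((1 : Matrix n n ℂ) ⊗ₖ A)) i (k, l) = ∑ y, Z i (k, y) * A y l := by
  rw [Matrix.mul_apply, Fintype.sum_prod_type, Finset.sum_eq_single k]
  · simp
  · intro b _ hb
    simp [Matrix.one_apply_ne hb]
  · simp

lemma swapM_mul_apply (Z : Matrix (n × n) (n × n) ℂ) (i k : n × n) :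
    (swapM n * Z) i k = Z i.swap k := by
  rw [Matrix.mul_apply, Finset.sum_eq_single i.swap]
  · simp [swapM]
  · rintro ⟨b1, b2⟩ - hb
    rw [swapM, Matrix.of_apply, if_neg, zero_mul]
    rintro ⟨h1, h2⟩
    exact hb (by ext <;> simp_all)
  · simp

lemma mul_swapM_apply (Z : Matrix (n × n) (n × n) ℂ) (i k : n × n) :
    (Z * swapM n) i k = Z i k.swap := by
  rw [Matrix.mul_apply, Finset.sum_eq_single k.swap]
  · simp [swapM]
  · rintro ⟨b1, b2⟩ - hb
    rw [swapM, Matrix.of_apply, if_neg, mul_zero]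
    rintro ⟨h1, h2⟩
    exact hb (by ext <;> simp_all)
  · simp

lemma swapM_sq : swapM n * swapM n = 1 := by
  ext i k
  rw [swapM_mul_apply, swapM, Matrix.of_apply, Matrix.one_apply]
  simp only [Prod.fst_swap, Prod.snd_swap, Prod.ext_iff]
  congr 1
  exact propext and_comm

lemma swapM_cancel (Z : Matrix (n × n) (n × n) ℂ) : swapM n * (swapM n * Z) = Z := by
  rw [← mul_assoc, swapM_sq, one_mul]

lemma swapM_mul_kronecker (A B : Matrix n n ℂ) :
    swapM n * (A ⊗ₖ B) = (B ⊗ₖ A) * swapM n := by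
  ext i k
  simp [swapM_mul_apply, mul_swapM_apply, mul_comm]

lemma trace_kronecker_mul_swapM (A B : Matrix n n ℂ) :
    ((A ⊗ₖ B) * swapM n).trace = (A * B).trace := by
  simp only [Matrix.trace, Matrix.diag_apply, mul_swapM_apply]
  simp only [Matrix.mul_apply, Fintype.sum_prod_type, kroneckerMap_apply, Prod.swap_prod_mk]

lemma trace_kronecker_one_mul (A : Matrix n n ℂ) (Z : Matrix (n × n) (n × n) ℂ) :
    ((A ⊗ₖ (1 : Matrix n n ℂ)) * Z).trace = (A * ptrace Z).trace := by
  simp only [Matrix.trace, Matrix.diag_apply, Matrix.mul_apply, Fintype.sum_prod_type, ptrace,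
    Matrix.of_apply, Matrix.kroneckerMap_apply, Matrix.one_apply, mul_ite, mul_one, mul_zero,
    ite_mul, zero_mul, Finset.sum_ite_eq, Finset.mem_univ, if_true, Finset.mul_sum]
  exact Finset.sum_congr rfl fun _ _ => Finset.sum_comm

/-- The `1` and `-1` eigenspaces of left multiplication by the swap are orthogonal, since the
swap is Hermitian. -/
lemma orth_left {X Y : Matrix (n × n) (n × n) ℂ} (hX : swapM n * X = X)
    (hY : swapM n * Y = -Y) : (Xᴴ * Y).trace = 0 ∧ (Yᴴ * X).trace = 0 := by
  have h1 : Xᴴ * Y = -(Xᴴ * Y) := by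
    conv_lhs => rw [← hX, conjTranspose_mul, swapM_conjTranspose, mul_assoc, hY, mul_neg]
  have h2 : Yᴴ * X = -(Yᴴ * X) := by
    conv_lhs => rw [← hX, ← mul_assoc, ← swapM_conjTranspose, ← conjTranspose_mul, hY,
      conjTranspose_neg, neg_mul]
  have h1' := congrArg Matrix.trace h1
  have h2' := congrArg Matrix.trace h2
  rw [trace_neg] at h1' h2'
  exact ⟨self_eq_neg.mp h1', self_eq_neg.mp h2'⟩

end Swap

/-! ### Completeness of the Pauli basis -/

/-- Completeness relation of the one-qubit Pauli basis. -/
lemma pauli_complete (i j k l : Fin 2) :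
    ∑ a, pauli a i j * pauli a k l = if i = l ∧ j = k then 2 else 0 := by
  fin_cases i <;> fin_cases j <;> fin_cases k <;> fin_cases l <;>
    simp [Fin.sum_univ_four, pauli] <;> norm_num

/-- Completeness relation of the two-qubit Pauli basis. -/
lemma pauliP_complete (i j k l : Fin 2 × Fin 2) :
    ∑ a, pauliP a i j * pauliP a k l = if i = l ∧ j = k then 4 else 0 := by
  have h : ∑ a, pauliP a i j * pauliP a k l =
      (∑ a, pauli a i.1 j.1 * pauli a k.1 l.1) * ∑ b, pauli b i.2 j.2 * pauli b k.2 l.2 := by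
    rw [Fintype.sum_prod_type, Finset.sum_mul_sum]
    refine Finset.sum_congr rfl fun _ _ => Finset.sum_congr rfl fun _ _ => ?_
    simp only [pauliP, kroneckerMap_apply]
    ring
  rw [h, pauli_complete, pauli_complete]
  simp only [Prod.ext_iff]
  split_ifs <;> first | tauto | norm_num

lemma pauliP_sq (a : Fin 4 × Fin 4) : pauliP a * pauliP a = 1 := by
  have h : ∀ b, pauli b * pauli b = 1 := by
    intro b
    fin_cases b <;> ext i j <;> fin_cases i <;> fin_cases j <;> simp [pauli]
  rw [pauliP, ← mul_kronecker_mul, h, h, one_kronecker_one]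

/-- The index set of the computational basis of two qubits. -/
abbrev Q2 := Fin 2 × Fin 2

/-- The Pauli string acting on the second copy. -/
noncomputable def pauliB (a : Fin 4 × Fin 4) : Matrix (Q2 × Q2) (Q2 × Q2) ℂ :=
  (1 : Matrix Q2 Q2 ℂ) ⊗ₖ pauliP a

lemma sum_pauliP_kronecker : ∑ a, pauliP a ⊗ₖ pauliP a = (4 : ℂ) • swapM Q2 := by
  ext ⟨i, j⟩ ⟨k, l⟩
  simp only [Matrix.sum_apply, kroneckerMap_apply, pauliP_complete, Matrix.smul_apply, swapM, of_apply,
    smul_eq_mul, mul_ite, mul_one, mul_zero]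
  congr 1
  simp only [eq_comm]

lemma sum_pauliB_mul_mul (Z : Matrix (Q2 × Q2) (Q2 × Q2) ℂ) :
    ∑ a, pauliB a * Z * pauliB a = (4 : ℂ) • (ptrace Z ⊗ₖ (1 : Matrix Q2 Q2 ℂ)) := by
  ext ⟨i, j⟩ ⟨k, l⟩
  have h : ∀ a, (pauliB a * Z * pauliB a) (i, j) (k, l) =
      ∑ y, ∑ x, Z (i, x) (k, y) * (pauliP a j x * pauliP a y l) := by
    intro a
    rw [pauliB, mul_one_kronecker_apply]
    refine Finset.sum_congr rfl fun y _ => ?_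
    rw [one_kronecker_mul_apply, Finset.sum_mul]
    exact Finset.sum_congr rfl fun x _ => by ring
  rw [Matrix.sum_apply, Finset.sum_congr rfl fun a _ => h a, Finset.sum_comm]
  rw [Finset.sum_congr rfl fun y _ => Finset.sum_comm]
  simp only [← Finset.mul_sum, pauliP_complete]
  simp only [Matrix.smul_apply, kroneckerMap_apply, ptrace, of_apply, Matrix.one_apply, smul_eq_mul]
  by_cases hjl : j = l
  · simp [hjl, mul_comm, Finset.mul_sum]
  · simp [hjl]

/-! ### The generator in terms of the swap, and its kernel vectors -/

lemma pauliQ_eq (a : Fin 4 × Fin 4) :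
    pauliQ a = swapM Q2 * pauliB a * swapM Q2 + pauliB a := by
  rw [pauliB, swapM_mul_kronecker, mul_assoc, swapM_sq, mul_one, pauliQ]

lemma swapM_comm_pauliQ (a : Fin 4 × Fin 4) :
    swapM Q2 * pauliQ a = pauliQ a * swapM Q2 := by
  rw [pauliQ, mul_add, add_mul, swapM_mul_kronecker, swapM_mul_kronecker, add_comm]

lemma sum_pauliQ_sq : ∑ a, pauliQ a * pauliQ a = (32 : ℂ) • 1 + (8 : ℂ) • swapM Q2 := by
  have h : ∀ a, pauliQ a * pauliQ a = (2 : ℂ) • 1 + (2 : ℂ) • (pauliP a ⊗ₖ pauliP a) := by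
    intro a
    simp only [pauliQ, add_mul, mul_add, ← mul_kronecker_mul, pauliP_sq, mul_one, one_mul,
      one_kronecker_one]
    module
  rw [Finset.sum_congr rfl fun a _ => h a, Finset.sum_add_distrib, ← Finset.smul_sum,
    ← Finset.smul_sum, sum_pauliP_kronecker, Finset.sum_const, Finset.card_univ]
  simp only [Fintype.card_prod, Fintype.card_fin]
  module

lemma genT_eq (Z : Matrix (Q2 × Q2) (Q2 × Q2) ℂ) :
    genT Z = -(32 : ℂ) • Z - (4 : ℂ) • (swapM Q2 * Z + Z * swapM Q2) +
      ∑ a, pauliQ a * Z * pauliQ a := by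
  have h : ∀ a, pauliQ a * (pauliQ a * Z - Z * pauliQ a) - (pauliQ a * Z - Z * pauliQ a) * pauliQ a
      = pauliQ a * pauliQ a * Z + Z * (pauliQ a * pauliQ a) -
        (2 : ℂ) • (pauliQ a * Z * pauliQ a) := by
    intro a
    rw [two_smul]
    noncomm_ring
  rw [genT, Finset.sum_congr rfl fun a _ => h a, Finset.sum_sub_distrib, Finset.sum_add_distrib,
    ← Finset.sum_mul, ← Finset.mul_sum, sum_pauliQ_sq, ← Finset.smul_sum]
  simp only [add_mul, mul_add, smul_mul_assoc, mul_smul_comm, one_mul, mul_one]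
  module

lemma genT_swapM_mul (Z : Matrix (Q2 × Q2) (Q2 × Q2) ℂ) :
    genT (swapM Q2 * Z) = swapM Q2 * genT Z := by
  rw [genT_eq, genT_eq, mul_add, mul_sub, mul_smul_comm, mul_smul_comm, Finset.mul_sum, mul_add,
    mul_assoc]
  congr 1
  refine Finset.sum_congr rfl fun a _ => ?_
  simp only [← mul_assoc, swapM_comm_pauliQ]

lemma genT_mul_swapM (Z : Matrix (Q2 × Q2) (Q2 × Q2) ℂ) :
    genT (Z * swapM Q2) = genT Z * swapM Q2 := by
  rw [genT_eq, genT_eq, add_mul, sub_mul, smul_mul_assoc, smul_mul_assoc, Finset.sum_mul, add_mul,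
    mul_assoc (swapM Q2) Z]
  congr 1
  refine Finset.sum_congr rfl fun a _ => ?_
  simp only [mul_assoc, swapM_comm_pauliQ]

lemma genT_add (X Y : Matrix (Q2 × Q2) (Q2 × Q2) ℂ) : genT (X + Y) = genT X + genT Y := by
  simp only [genT_eq, mul_add, add_mul, Finset.sum_add_distrib]
  module

lemma genT_one : genT 1 = 0 := by simp [genT]

/-- Up to an affine change, `F` is the swap; so `1` and `F` span the same space as `1` and `S`. -/
lemma pauliF_eq : pauliF = (4 : ℂ) • swapM Q2 - 1 := by
  have h : pauli 0 = 1 := by ext i j; fin_cases i <;> fin_cases j <;> simp [pauli]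
  have h0 : pauliP (0, 0) ⊗ₖ pauliP (0, 0) = 1 := by
    rw [pauliP, h, one_kronecker_one, one_kronecker_one]
  rw [← sum_pauliP_kronecker, pauliF, Finset.filter_ne', ← h0]
  exact eq_sub_of_add_eq (Finset.sum_erase_add (Finset.univ : Finset (Fin 4 × Fin 4))
    (fun a => pauliP a ⊗ₖ pauliP a) (Finset.mem_univ ((0 : Fin 4), (0 : Fin 4))))

lemma genT_pauliF : genT pauliF = 0 := by
  have h : ∀ a, pauliQ a * pauliF = pauliF * pauliQ a := by
    intro a
    rw [pauliF_eq, mul_sub, sub_mul, mul_smul_comm, smul_mul_assoc, swapM_comm_pauliQ, mul_one,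
      one_mul]
  simp [genT, h]

/-! ### The gap on the joint eigenspaces of the swap -/

open scoped ComplexOrder in
lemma trace_conjTranspose_mul_self_re_nonneg (X : Matrix (Q2 × Q2) (Q2 × Q2) ℂ) :
    0 ≤ ((Xᴴ * X).trace).re :=
  (Complex.le_def.mp (posSemidef_conjTranspose_mul_self X).trace_nonneg).1

/-- The gap inequality on the joint eigenspace with signs `s`, `t` of left and right
multiplication by the swap. There `genT Y = -(32 + 4 (s + t)) Y + 4 L`, where `L` is four times
the projection of `ptrace Y ⊗ 1` to that eigenspace. With `c = ‖ptrace Y‖²` and `k = 4 + s + t`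
one has `⟪Y, L⟫ = 4 c` and `‖L‖² = 4 k c`, so that `0 ≤ ‖k Y - L‖²` gives `4 c ≤ k ‖Y‖²`. -/
lemma genT_block (s t : ℝ) (hs : s = 1 ∨ s = -1) (ht : t = 1 ∨ t = -1)
    (Y : Matrix (Q2 × Q2) (Q2 × Q2) ℂ) (hsY : swapM Q2 * Y = (s : ℂ) • Y)
    (htY : Y * swapM Q2 = (t : ℂ) • Y) (htr : Y.trace = 0) :
    ((Yᴴ * genT Y).trace).re ≤ -16 * ((Yᴴ * Y).trace).re := by
  have hss : (s : ℂ) * s = 1 := by rcases hs with rfl | rfl <;> simp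
  have htt : (t : ℂ) * t = 1 := by rcases ht with rfl | rfl <;> simp
  set S := swapM Q2 with hS
  have hSS : S * S = 1 := swapM_sq
  have hSc : ∀ X, S * (S * X) = X := swapM_cancel
  have hSH : Sᴴ = S := swapM_conjTranspose
  set C := ptrace Y with hC
  set D := C ⊗ₖ (1 : Matrix Q2 Q2 ℂ) with hD
  set L := D + (s : ℂ) • (S * D) + (t : ℂ) • (D * S) + ((s : ℂ) * t) • (S * D * S) with hL
  set c := (Cᴴ * C).trace with hc
  have hSL : S * L = (s : ℂ) • L := by
    simp only [hL, mul_add, mul_smul_comm, mul_assoc, hSc, smul_add, smul_smul, hss]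
    rw [← mul_assoc (s : ℂ), hss]
    module
  have hLS : L * S = (t : ℂ) • L := by
    simp only [hL, add_mul, smul_mul_assoc, mul_assoc, hSS, mul_one, smul_add, smul_smul, htt]
    rw [mul_left_comm, htt]
    module
  -- For `X` in the eigenspace, pairing with `L` is four times pairing with `D`.
  have hpair : ∀ X : Matrix (Q2 × Q2) (Q2 × Q2) ℂ, S * X = (s : ℂ) • X → X * S = (t : ℂ) • X →
      (Lᴴ * X).trace = 4 * (Dᴴ * X).trace := by
    intro X h1 h2
    have e1 : ((S * D)ᴴ * X).trace = s * (Dᴴ * X).trace := by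
      rw [conjTranspose_mul, hSH, mul_assoc, h1, mul_smul_comm, trace_smul, smul_eq_mul]
    have e2 : ((D * S)ᴴ * X).trace = t * (Dᴴ * X).trace := by
      rw [conjTranspose_mul, hSH, mul_assoc, trace_mul_comm, mul_assoc, h2, mul_smul_comm,
        trace_smul, smul_eq_mul]
    have e3 : ((S * D * S)ᴴ * X).trace = s * t * (Dᴴ * X).trace := by
      rw [conjTranspose_mul, conjTranspose_mul, hSH, mul_assoc, trace_mul_comm, mul_assoc, h2,
        mul_assoc, mul_smul_comm, h1]
      simp only [mul_smul_comm, trace_smul, smul_eq_mul]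
      ring
    simp only [hL, conjTranspose_add, conjTranspose_smul, add_mul, smul_mul_assoc, trace_add,
      trace_smul, e1, e2, e3, smul_eq_mul, star_mul', RCLike.star_def, Complex.conj_ofReal]
    linear_combination (1 + (t : ℂ) * t) * (Dᴴ * X).trace * hss + 2 * (Dᴴ * X).trace * htt
  have hDH : Dᴴ = Cᴴ ⊗ₖ (1 : Matrix Q2 Q2 ℂ) := by
    rw [hD, conjTranspose_kronecker, conjTranspose_one]
  have hDY : (Dᴴ * Y).trace = c := by rw [hDH, trace_kronecker_one_mul]
  have htrC : C.trace = 0 := by rw [hC, trace_ptrace, htr]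
  have hDD : (Dᴴ * D).trace = 4 * c := by
    rw [hDH, hD, ← mul_kronecker_mul, trace_kronecker, one_mul, trace_one]
    simp [hc, mul_comm]
  have hDSD : (Dᴴ * (S * D)).trace = c := by
    rw [hDH, hD, swapM_mul_kronecker, ← mul_assoc, ← mul_kronecker_mul, trace_kronecker_mul_swapM,
      mul_one, one_mul]
  have hDDS : (Dᴴ * (D * S)).trace = c := by
    rw [hDH, hD, ← mul_assoc, ← mul_kronecker_mul, trace_kronecker_mul_swapM, mul_one, mul_one]
  have hDSDS : (Dᴴ * (S * D * S)).trace = 0 := by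
    rw [hDH, hD, swapM_mul_kronecker, mul_assoc, hSS, mul_one, ← mul_kronecker_mul,
      trace_kronecker, one_mul, htrC, mul_zero]
  have hDL : (Dᴴ * L).trace = (4 + s + t) * c := by
    simp only [hL, mul_add, mul_smul_comm, trace_add, trace_smul, hDD, hDSD, hDDS, hDSDS,
      smul_eq_mul]
    ring
  have hLY : (Lᴴ * Y).trace = 4 * c := by rw [hpair Y hsY htY, hDY]
  have hLL : (Lᴴ * L).trace = 4 * ((4 + s + t) * c) := by rw [hpair L hSL hLS, hDL]
  have hcr : star c = c := by
    rw [hc, ← trace_conjTranspose, conjTranspose_mul, conjTranspose_conjTranspose]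
  have hYL : (Yᴴ * L).trace = 4 * c := by
    have := congrArg star hLY
    rw [← trace_conjTranspose, conjTranspose_mul, conjTranspose_conjTranspose, star_mul', hcr]
      at this
    simpa using this
  have hT : genT Y = -(32 + 4 * (s + t) : ℂ) • Y + (4 : ℂ) • L := by
    have hsum : ∑ a, pauliQ a * Y * pauliQ a = (4 : ℂ) • L := by
      have h : ∀ a, pauliQ a * Y * pauliQ a = pauliB a * Y * pauliB a +
          (s : ℂ) • (S * (pauliB a * Y * pauliB a)) +
          (t : ℂ) • ((pauliB a * Y * pauliB a) * S) +
          ((s : ℂ) * t) • (S * (pauliB a * Y * pauliB a) * S) := by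
        intro a
        have h1 : S * pauliB a * S * Y = (s : ℂ) • (S * (pauliB a * Y)) := by
          rw [mul_assoc, hsY]; simp [mul_assoc]
        have h2 : pauliB a * Y * (S * pauliB a * S) = (t : ℂ) • (pauliB a * Y * pauliB a * S) := by
          rw [mul_assoc (pauliB a), ← mul_assoc Y, ← mul_assoc Y, htY]
          simp [mul_assoc]
        have hQ : pauliQ a = S * pauliB a * S + pauliB a := pauliQ_eq a
        rw [hQ, add_mul, h1, mul_add, add_mul, add_mul, smul_mul_assoc, smul_mul_assoc,
          mul_assoc S (pauliB a * Y), mul_assoc S (pauliB a * Y), h2, mul_smul_comm]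
        simp only [mul_assoc]
        module
      rw [Finset.sum_congr rfl fun a _ => h a]
      simp only [Finset.sum_add_distrib, ← Finset.smul_sum, ← Finset.mul_sum, ← Finset.sum_mul,
        sum_pauliB_mul_mul, mul_smul_comm, smul_mul_assoc]
      rw [hL]
      module
    rw [genT_eq, hsum, hsY, htY]
    module
  have hTY : (Yᴴ * genT Y).trace = -(32 + 4 * (s + t)) * (Yᴴ * Y).trace + 16 * c := by
    rw [hT]
    simp only [mul_add, mul_smul_comm, trace_add, trace_smul, hYL, smul_eq_mul]
    ring
  have hpos : 0 ≤ (((((4 + s + t : ℝ) : ℂ) • Y - L)ᴴ * (((4 + s + t : ℝ) : ℂ) • Y - L)).trace).re :=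
    trace_conjTranspose_mul_self_re_nonneg _
  have hexp : ((((4 + s + t : ℝ) : ℂ) • Y - L)ᴴ * (((4 + s + t : ℝ) : ℂ) • Y - L)).trace =
      ((4 + s + t : ℝ) : ℂ) * (((4 + s + t : ℝ) : ℂ) * (Yᴴ * Y).trace - 4 * c) := by
    simp only [conjTranspose_sub, conjTranspose_smul, sub_mul, mul_sub, smul_mul_assoc,
      mul_smul_comm, trace_sub, trace_smul, hYL, hLY, hLL, smul_eq_mul, RCLike.star_def,
      Complex.conj_ofReal]
    push_cast
    ring
  have hk : 0 < 4 + s + t := by rcases hs with rfl | rfl <;> rcases ht with rfl | rfl <;> norm_num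
  rw [hexp, Complex.re_ofReal_mul, mul_nonneg_iff_of_pos_left hk, Complex.sub_re,
    Complex.re_ofReal_mul] at hpos
  have h4 : (4 * c).re = 4 * c.re := by simp
  have hre : ((Yᴴ * genT Y).trace).re = -(32 + 4 * (s + t)) * ((Yᴴ * Y).trace).re + 16 * c.re := by
    rw [hTY]
    have : (-(32 + 4 * (s + t)) : ℂ) = ((-(32 + 4 * (s + t)) : ℝ) : ℂ) := by push_cast; ring
    rw [this, Complex.add_re, Complex.re_ofReal_mul]
    simp
  rw [hre]
  linarith

/-! ### Reassembling the eigenspaces -/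

/-- The gap inequality is additive over an orthogonal splitting that `genT` respects. -/
lemma gap_add {X Y : Matrix (Q2 × Q2) (Q2 × Q2) ℂ}
    (hX : ((Xᴴ * genT X).trace).re ≤ -16 * ((Xᴴ * X).trace).re)
    (hY : ((Yᴴ * genT Y).trace).re ≤ -16 * ((Yᴴ * Y).trace).re)
    (h1 : (Xᴴ * Y).trace = 0) (h2 : (Yᴴ * X).trace = 0)
    (h3 : (Xᴴ * genT Y).trace = 0) (h4 : (Yᴴ * genT X).trace = 0) :
    (((X + Y)ᴴ * genT (X + Y)).trace).re ≤ -16 * (((X + Y)ᴴ * (X + Y)).trace).re := by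
  simp only [genT_add, conjTranspose_add, add_mul, mul_add, trace_add, h1, h2, h3, h4,
    Complex.add_re, Complex.zero_re]
  linarith

lemma genT_smul (c : ℂ) (X : Matrix (Q2 × Q2) (Q2 × Q2) ℂ) : genT (c • X) = c • genT X := by
  simp only [genT_eq, mul_smul_comm, smul_mul_assoc, ← Finset.smul_sum]
  module

lemma orth_right {X Y : Matrix (Q2 × Q2) (Q2 × Q2) ℂ} (hX : X * swapM Q2 = X)
    (hY : Y * swapM Q2 = -Y) : (Xᴴ * Y).trace = 0 ∧ (Yᴴ * X).trace = 0 := by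
  have h1 : swapM Q2 * Xᴴ = Xᴴ := by
    rw [← swapM_conjTranspose, ← conjTranspose_mul, hX]
  have h2 : swapM Q2 * Yᴴ = -Yᴴ := by
    rw [← swapM_conjTranspose, ← conjTranspose_mul, hY, conjTranspose_neg]
  have h := orth_left h1 h2
  rw [conjTranspose_conjTranspose, conjTranspose_conjTranspose, trace_mul_comm,
    trace_mul_comm Y] at h
  exact h.symm

/-- The gap inequality on an eigenspace of left multiplication by the swap. -/
lemma genT_left (s : ℝ) (hs : s = 1 ∨ s = -1)
    (Y : Matrix (Q2 × Q2) (Q2 × Q2) ℂ) (hsY : swapM Q2 * Y = (s : ℂ) • Y)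
    (htr : Y.trace = 0) (htr' : (Y * swapM Q2).trace = 0) :
    ((Yᴴ * genT Y).trace).re ≤ -16 * ((Yᴴ * Y).trace).re := by
  set X₁ := (1 / 2 : ℂ) • (Y + Y * swapM Q2) with hX₁
  set X₂ := (1 / 2 : ℂ) • (Y - Y * swapM Q2) with hX₂
  have hY : Y = X₁ + X₂ := by rw [hX₁, hX₂]; module
  have r1 : X₁ * swapM Q2 = X₁ := by
    rw [hX₁, smul_mul_assoc, add_mul, mul_assoc, swapM_sq, mul_one, add_comm]
  have r2 : X₂ * swapM Q2 = -X₂ := by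
    rw [hX₂, smul_mul_assoc, sub_mul, mul_assoc, swapM_sq, mul_one]; module
  have l1 : swapM Q2 * X₁ = (s : ℂ) • X₁ := by
    rw [hX₁, mul_smul_comm, mul_add, ← mul_assoc, hsY, smul_mul_assoc]; module
  have l2 : swapM Q2 * X₂ = (s : ℂ) • X₂ := by
    rw [hX₂, mul_smul_comm, mul_sub, ← mul_assoc, hsY, smul_mul_assoc]; module
  have g1 : genT X₁ * swapM Q2 = genT X₁ := by rw [← genT_mul_swapM, r1]
  have g2 : genT X₂ * swapM Q2 = -genT X₂ := by
    rw [← genT_mul_swapM, r2, ← neg_one_smul ℂ, genT_smul, neg_one_smul]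
  rw [hY]
  refine gap_add (genT_block s 1 hs (.inl rfl) X₁ l1 (by simpa using r1) ?_)
    (genT_block s (-1) hs (.inr rfl) X₂ l2 (by simpa using r2) ?_)
    (orth_right r1 r2).1 (orth_right r1 r2).2 (orth_right r1 g2).1 (orth_right g1 r2).2
  · rw [hX₁, trace_smul, trace_add, htr, htr', add_zero, smul_zero]
  · rw [hX₂, trace_smul, trace_sub, htr, htr', sub_zero, smul_zero]

/-- The generator T of the local two-qubit second moment operator annihilates the
identity and F, and has spectral gap at least 16 above its two-dimensional invariant
subspace spanned by I₁₆ and F: for Z with Tr(Z) = 0 and Tr(F·Z) = 0 one has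
Re Tr(Zᴴ T(Z)) ≤ −16 Tr(Zᴴ Z). -/
theorem genT_gap :
    genT 1 = 0 ∧ genT pauliF = 0 ∧
    ∀ Z : Matrix ((Fin 2 × Fin 2) × (Fin 2 × Fin 2)) ((Fin 2 × Fin 2) × (Fin 2 × Fin 2)) ℂ,
      Z.trace = 0 → (pauliF * Z).trace = 0 →
      ((Zᴴ * genT Z).trace).re ≤ -16 * ((Zᴴ * Z).trace).re := by
  refine ⟨genT_one, genT_pauliF, fun Z hZ hFZ => ?_⟩
  have hSZ : (swapM Q2 * Z).trace = 0 := by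
    rw [pauliF_eq, sub_mul, one_mul, smul_mul_assoc, trace_sub, trace_smul, hZ, sub_zero] at hFZ
    simpa using hFZ
  have hZS : (Z * swapM Q2).trace = 0 := by rw [trace_mul_comm, hSZ]
  have hSZS : (swapM Q2 * Z * swapM Q2).trace = 0 := by
    rw [trace_mul_comm, swapM_cancel, hZ]
  set X₁ := (1 / 2 : ℂ) • (Z + swapM Q2 * Z) with hX₁
  set X₂ := (1 / 2 : ℂ) • (Z - swapM Q2 * Z) with hX₂
  have hY : Z = X₁ + X₂ := by rw [hX₁, hX₂]; module
  have l1 : swapM Q2 * X₁ = X₁ := by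
    rw [hX₁, mul_smul_comm, mul_add, swapM_cancel, add_comm]
  have l2 : swapM Q2 * X₂ = -X₂ := by
    rw [hX₂, mul_smul_comm, mul_sub, swapM_cancel]; module
  have g1 : swapM Q2 * genT X₁ = genT X₁ := by rw [← genT_swapM_mul, l1]
  have g2 : swapM Q2 * genT X₂ = -genT X₂ := by
    rw [← genT_swapM_mul, l2, ← neg_one_smul ℂ, genT_smul, neg_one_smul]
  rw [hY]
  refine gap_add (genT_left 1 (.inl rfl) X₁ (by simpa using l1) ?_ ?_)
    (genT_left (-1) (.inr rfl) X₂ (by simpa using l2) ?_ ?_)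
    (orth_left l1 l2).1 (orth_left l1 l2).2 (orth_left l1 g2).1 (orth_left g1 l2).2
  · rw [hX₁, trace_smul, trace_add, hZ, hSZ, add_zero, smul_zero]
  · rw [hX₁, smul_mul_assoc, trace_smul, add_mul, trace_add, hZS, hSZS, add_zero, smul_zero]
  · rw [hX₂, trace_smul, trace_sub, hZ, hSZ, sub_zero, smul_zero]
  · rw [hX₂, smul_mul_assoc, trace_smul, sub_mul, trace_sub, hZS, hSZS, sub_zero, smul_zero]
end

section
/- Let σ₀ = I₂, σ₁, σ₂, σ₃ be the 2×2 Pauli matrices, for α, β ∈ {0,1,2,3} set P_{αβ} = σ_α ⊗ σ_β ∈ M₄(ℂ) and Q_{αβ} = P_{αβ} ⊗ I₄ + I₄ ⊗ P_{αβ} ∈ M₁₆(ℂ), and let T : M₁₆(ℂ) → M₁₆(ℂ) be T(Z) = −(1/2) Σ_{α,β=0}^{3} [Q_{αβ}, [Q_{αβ}, Z]]. Then: (i) T is self-adjoint with respect to the Hilbert–Schmidt inner product, i.e. Tr((T(W))ᴴ Z) = Tr(Wᴴ T(Z)) for all W, Z ∈ M₁₆(ℂ); (ii) for every γ = (γ₁,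 γ₂) ∈ {0,1,2,3}², the image T(P_γ ⊗ P_γ) lies in the complex linear span of { P_δ ⊗ P_δ : δ ∈ {0,1,2,3}² }; (iii) for every pair μ ≠ ν in {0,1,2,3}², the image T(P_μ ⊗ P_ν) lies in the complex linear span of { P_δ ⊗ P_ε : δ ≠ ε }. Hence T is block diagonal with respect to the splitting of the Pauli basis into diagonal strings σ_μ ⊗ σ_μ and off-diagonal strings σ_μ ⊗ σ_ν with μ ≠ ν. -/
/-!
Write `[Q, Z] = Q * Z - Z * Q`. Since each `pauliQ a` is Hermitian, `Z ↦ [pauliQ a, Z]` is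
self-adjoint for the Hilbert–Schmidt inner product (cyclicity of the trace), hence so is its square,
and `genT` is a real combination of such squares.

For the block structure, Pauli strings multiply, up to a scalar, as the elementary abelian 2-group
of labels under componentwise XOR, written `pauliIdx`. In the double commutator of `P_μ ⊗ P_ν` with
`P_a ⊗ 1 + 1 ⊗ P_a`, every monomial has either both factors `P_a` on one tensor leg, which changes
neither label, or one factor on each leg, which translates both labels by `a`. Hence
`genT (P_μ ⊗ P_ν)` lies in the span of `P_μ ⊗ P_ν` and the `P_{a+μ} ⊗ P_{a+ν}`
(`genT_mem`), and translation preserves both equality and inequality of labels.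
-/

open Matrix Kronecker Finset

/-- The product of labels of Pauli strings modulo phases: componentwise XOR. -/
def pauliIdx (a b : Fin 4 × Fin 4) : Fin 4 × Fin 4 := (a.1 ^^^ b.1, a.2 ^^^ b.2)

theorem pauliIdx_comm (a b : Fin 4 × Fin 4) : pauliIdx a b = pauliIdx b a := by
  revert a b; decide

theorem pauliIdx_cancel (a b : Fin 4 × Fin 4) : pauliIdx a (pauliIdx a b) = b := by
  revert a b; decide

theorem pauli_mul (a b : Fin 4) : ∃ c : ℂ, pauli a * pauli b = c • pauli (a ^^^ b) := by
  have key : ∀ d : Fin 4, a ^^^ b = d → ∃ c : ℂ, pauli a * pauli b = c • pauli d := by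
    intro d hd
    -- the possible phases are `1`, `I` and `-I`
    fin_cases a <;> fin_cases b <;> subst hd <;>
    first
    | (refine ⟨1, ?_⟩
       ext i j; fin_cases i <;> fin_cases j <;> simp [pauli, Matrix.mul_apply] <;> done)
    | (refine ⟨Complex.I, ?_⟩
       ext i j; fin_cases i <;> fin_cases j <;> simp [pauli, Matrix.mul_apply] <;> done)
    | (refine ⟨-Complex.I, ?_⟩
       ext i j; fin_cases i <;> fin_cases j <;> simp [pauli, Matrix.mul_apply])
  exact key _ rfl

theorem pauliP_mul (a b : Fin 4 × Fin 4) :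
    ∃ c : ℂ, pauliP a * pauliP b = c • pauliP (pauliIdx a b) := by
  obtain ⟨c, hc⟩ := pauli_mul a.1 b.1
  obtain ⟨d, hd⟩ := pauli_mul a.2 b.2
  refine ⟨c * d, ?_⟩
  simp only [pauliP, pauliIdx]
  rw [← Matrix.mul_kronecker_mul, hc, hd, Matrix.smul_kronecker, Matrix.kronecker_smul, smul_smul]

theorem pauliP_mul' (a b : Fin 4 × Fin 4) :
    ∃ c : ℂ, pauliP b * pauliP a = c • pauliP (pauliIdx a b) := by
  rw [pauliIdx_comm]; exact pauliP_mul b a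

theorem pauliP_mul_mul (a b : Fin 4 × Fin 4) :
    ∃ c : ℂ, pauliP a * (pauliP a * pauliP b) = c • pauliP b := by
  obtain ⟨c, hc⟩ := pauliP_mul a b
  obtain ⟨d, hd⟩ := pauliP_mul a (pauliIdx a b)
  refine ⟨c * d, ?_⟩
  rw [hc, Matrix.mul_smul, hd, pauliIdx_cancel, smul_smul]

theorem pauliP_mul_mul' (a b : Fin 4 × Fin 4) :
    ∃ c : ℂ, pauliP a * (pauliP b * pauliP a) = c • pauliP b := by
  obtain ⟨c, hc⟩ := pauliP_mul' a b
  obtain ⟨d, hd⟩ := pauliP_mul a (pauliIdx a b)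
  refine ⟨c * d, ?_⟩
  rw [hc, Matrix.mul_smul, hd, pauliIdx_cancel, smul_smul]

theorem pauliP_mul_mul'' (a b : Fin 4 × Fin 4) :
    ∃ c : ℂ, pauliP b * pauliP a * pauliP a = c • pauliP b := by
  obtain ⟨c, hc⟩ := pauliP_mul' a b
  obtain ⟨d, hd⟩ := pauliP_mul' a (pauliIdx a b)
  refine ⟨c * d, ?_⟩
  rw [hc, Matrix.smul_mul, hd, pauliIdx_cancel, smul_smul]

theorem kronecker_mem {V : Submodule ℂ
      (Matrix ((Fin 2 × Fin 2) × (Fin 2 × Fin 2)) ((Fin 2 × Fin 2) × (Fin 2 × Fin 2)) ℂ)}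
    {A B A' B' : Matrix (Fin 2 × Fin 2) (Fin 2 × Fin 2) ℂ}
    (hA : ∃ c : ℂ, A = c • A') (hB : ∃ c : ℂ, B = c • B') (h : A' ⊗ₖ B' ∈ V) :
    A ⊗ₖ B ∈ V := by
  obtain ⟨c, rfl⟩ := hA
  obtain ⟨d, rfl⟩ := hB
  rw [Matrix.smul_kronecker, Matrix.kronecker_smul]
  exact V.smul_mem _ (V.smul_mem _ h)

/-- A subspace containing a Pauli string `P_μ ⊗ P_ν` together with all the simultaneous translates
of its two labels contains the image of that string under `genT`. -/
theorem genT_mem (V : Submodule ℂ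
      (Matrix ((Fin 2 × Fin 2) × (Fin 2 × Fin 2)) ((Fin 2 × Fin 2) × (Fin 2 × Fin 2)) ℂ))
    (μ ν : Fin 4 × Fin 4) (h : pauliP μ ⊗ₖ pauliP ν ∈ V)
    (ht : ∀ a, pauliP (pauliIdx a μ) ⊗ₖ pauliP (pauliIdx a ν) ∈ V) :
    genT (pauliP μ ⊗ₖ pauliP ν) ∈ V := by
  refine V.smul_mem _ (V.sum_mem fun a _ => ?_)
  have one (b) : ∃ c : ℂ, pauliP b = c • pauliP b := ⟨1, (one_smul _ _).symm⟩
  have h1 : pauliQ a * (pauliQ a * (pauliP μ ⊗ₖ pauliP ν)) ∈ V := by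
    simp only [pauliQ, Matrix.add_mul, Matrix.mul_add, ← Matrix.mul_kronecker_mul,
      Matrix.one_mul]
    exact V.add_mem
      (V.add_mem (kronecker_mem (pauliP_mul_mul a μ) (one ν) h)
        (kronecker_mem (pauliP_mul a μ) (pauliP_mul a ν) (ht a)))
      (V.add_mem (kronecker_mem (pauliP_mul a μ) (pauliP_mul a ν) (ht a))
        (kronecker_mem (one μ) (pauliP_mul_mul a ν) h))
  have h2 : pauliQ a * ((pauliP μ ⊗ₖ pauliP ν) * pauliQ a) ∈ V := by
    simp only [pauliQ, Matrix.add_mul, Matrix.mul_add, ← Matrix.mul_kronecker_mul,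
      Matrix.one_mul, Matrix.mul_one]
    exact V.add_mem
      (V.add_mem (kronecker_mem (pauliP_mul_mul' a μ) (one ν) h)
        (kronecker_mem (pauliP_mul' a μ) (pauliP_mul a ν) (ht a)))
      (V.add_mem (kronecker_mem (pauliP_mul a μ) (pauliP_mul' a ν) (ht a))
        (kronecker_mem (one μ) (pauliP_mul_mul' a ν) h))
  have h3 : (pauliP μ ⊗ₖ pauliP ν) * pauliQ a * pauliQ a ∈ V := by
    simp only [pauliQ, Matrix.add_mul, Matrix.mul_add, ← Matrix.mul_kronecker_mul,
      Matrix.mul_one]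
    exact V.add_mem
      (V.add_mem (kronecker_mem (pauliP_mul_mul'' a μ) (one ν) h)
        (kronecker_mem (pauliP_mul' a μ) (pauliP_mul' a ν) (ht a)))
      (V.add_mem (kronecker_mem (pauliP_mul' a μ) (pauliP_mul' a ν) (ht a))
        (kronecker_mem (one μ) (pauliP_mul_mul'' a ν) h))
  rw [Matrix.mul_sub, Matrix.sub_mul]
  refine V.sub_mem (V.sub_mem h1 h2) (V.sub_mem ?_ h3)
  rwa [Matrix.mul_assoc]

theorem pauli_conjTranspose (a : Fin 4) : (pauli a)ᴴ = pauli a := by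
  fin_cases a <;> ext i j <;> fin_cases i <;> fin_cases j <;> simp [pauli]

theorem pauliQ_conjTranspose (a : Fin 4 × Fin 4) : (pauliQ a)ᴴ = pauliQ a := by
  simp [pauliQ, pauliP, Matrix.conjTranspose_kronecker, pauli_conjTranspose]

/-- Commutation with a Hermitian matrix is self-adjoint for the Hilbert–Schmidt inner product. -/
theorem trace_commutator {n : Type*} [Fintype n] {Q : Matrix n n ℂ} (hQ : Qᴴ = Q)
    (W Z : Matrix n n ℂ) :
    ((Q * W - W * Q)ᴴ * Z).trace = (Wᴴ * (Q * Z - Z * Q)).trace := by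
  simp only [Matrix.conjTranspose_sub, Matrix.conjTranspose_mul, hQ, Matrix.sub_mul,
    Matrix.mul_sub, Matrix.trace_sub, Matrix.mul_assoc]
  rw [Matrix.trace_mul_comm Q, Matrix.mul_assoc]

/-- The generator T of the local two-qubit second moment operator is self-adjoint
with respect to the Hilbert–Schmidt inner product, maps diagonal Pauli strings
P_γ ⊗ P_γ into the span of diagonal Pauli strings, and maps off-diagonal Pauli
strings P_μ ⊗ P_ν (μ ≠ ν) into the span of off-diagonal Pauli strings; hence it is
block diagonal with respect to this splitting of the Pauli basis. -/
theorem genT_selfAdjoint_blockDiagonal :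
    (∀ W Z : Matrix ((Fin 2 × Fin 2) × (Fin 2 × Fin 2)) ((Fin 2 × Fin 2) × (Fin 2 × Fin 2)) ℂ,
      ((genT W)ᴴ * Z).trace = (Wᴴ * genT Z).trace) ∧
    (∀ γ : Fin 4 × Fin 4,
      genT (pauliP γ ⊗ₖ pauliP γ) ∈
        Submodule.span ℂ (Set.range fun δ : Fin 4 × Fin 4 => pauliP δ ⊗ₖ pauliP δ)) ∧
    (∀ μ ν : Fin 4 × Fin 4, μ ≠ ν →
      genT (pauliP μ ⊗ₖ pauliP ν) ∈
        Submodule.span ℂ {M | ∃ δ ε : Fin 4 × Fin 4, δ ≠ ε ∧ M = pauliP δ ⊗ₖ pauliP ε}) := by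
  refine ⟨fun W Z => ?_, fun γ => ?_, fun μ ν hμν => ?_⟩
  · simp only [genT, Matrix.conjTranspose_smul, Matrix.conjTranspose_sum, Matrix.smul_mul,
      Matrix.mul_smul, Matrix.trace_smul, Matrix.sum_mul, Matrix.mul_sum, Matrix.trace_sum,
      trace_commutator (pauliQ_conjTranspose _)]
    simp
  · exact genT_mem _ γ γ (Submodule.subset_span ⟨γ, rfl⟩)
      fun a => Submodule.subset_span ⟨pauliIdx a γ, rfl⟩
  · refine genT_mem _ μ ν (Submodule.subset_span ⟨μ, ν, hμν, rfl⟩)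
      fun a => Submodule.subset_span ⟨pauliIdx a μ, pauliIdx a ν, fun h => hμν ?_, rfl⟩
    rw [← pauliIdx_cancel a μ, h, pauliIdx_cancel]
end

section
/- (Relating global and local gaps) Let D ≥ 1, let E be a nonempty finite index set, and let P, (q_e)_{e∈E}, (m_e)_{e∈E} be D×D complex matrices such that: P and every q_e are orthogonal projections (Hermitian and idempotent); every m_e is Hermitian with operator norm ‖m_e‖ ≤ 1; P·q_e = q_e·P = P for all e; and m_e·q_e = q_e·m_e = q_e for all e. Set γ := max_{e∈E} ‖m_e − q_e‖ and assume γ ≤ 1. Then the averaged operators satisfy ‖ (1/|E|) Σ_{e∈E} m_e − P ‖ ≤ 1 − (1 − γ) · ( 1 − ‖ (1/|E|) Σ_{e∈E} q_e − P ‖ ). -/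
/-!
Everything happens in the Loewner order of the C⋆-algebra of operators on `ℂ^D`.
Since `m - q` vanishes on the range of `q`, compressing `-γ ≤ m - q ≤ γ` by the projection
`1 - q` gives the sharper bounds `-γ (1 - q) ≤ m - q ≤ γ (1 - q)`
(`bounds_of_absorbs_projection`). Averaging over the edges, with `M` and `Q` the two averages,
`M - P ≤ γ (1 - P) + (1 - γ) (Q - P) ≤ γ + (1 - γ) ‖Q - P‖`, because `0 ≤ P`.
In the other direction `M - P ≥ (Q - P) - γ (1 - Q) ≥ -γ`, because `P ≤ q` for every edge and
`0 ≤ Q`. A self-adjoint element lying between `-r` and `r` has norm at most `r`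
(`norm_le_of_neg_le_of_le`), and here `r = γ + (1 - γ) ‖Q - P‖` works on both sides.
-/

open Matrix Finset

/-- The ℓ²→ℓ² operator norm (largest singular value) of a complex D×D matrix. -/
noncomputable def matOpNorm {D : ℕ} (M : Matrix (Fin D) (Fin D) ℂ) : ℝ :=
  ‖(Matrix.toEuclideanCLM (𝕜 := ℂ) M :
      EuclideanSpace ℂ (Fin D) →L[ℂ] EuclideanSpace ℂ (Fin D))‖

section CStar

variable {A : Type*} [CStarAlgebra A] [PartialOrder A] [StarOrderedRing A]

theorem norm_le_of_neg_le_of_le [Nontrivial A] {a : A} {r : ℝ} (ha : IsSelfAdjoint a)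
    (h1 : -(r • (1 : A)) ≤ a) (h2 : a ≤ r • (1 : A)) : ‖a‖ ≤ r := by
  rw [← Algebra.algebraMap_eq_smul_one] at h1 h2
  rw [← map_neg] at h1
  have hl := (algebraMap_le_iff_le_spectrum (a := a)).1 h1
  have hu := (le_algebraMap_iff_spectrum_le (a := a)).1 h2
  rcases CStarAlgebra.norm_or_neg_norm_mem_spectrum (a := a) ha with h | h
  · exact hu _ h
  · linarith [hl _ h]

theorem self_le_norm_smul_one {a : A} (ha : IsSelfAdjoint a) : a ≤ ‖a‖ • (1 : A) := by
  rw [← Algebra.algebraMap_eq_smul_one]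
  exact ha.le_algebraMap_norm_self

theorem projection_nonneg {p : A} (hp : IsSelfAdjoint p) (hpp : p * p = p) : 0 ≤ p := by
  have := star_mul_self_nonneg p
  rwa [hp.star_eq, hpp] at this

/-- Conjugating `b ≤ ‖b‖ ≤ r` by the projection `p` preserves the order, and turns the scalar
`r` into `r p` while leaving `b` unchanged. -/
theorem le_smul_of_conjugate_eq {b p : A} {r : ℝ} (hb : IsSelfAdjoint b) (hp : IsSelfAdjoint p)
    (hpp : p * p = p) (hpb : p * b * p = b) (hr : ‖b‖ ≤ r) : b ≤ r • p := by
  have h1 : b ≤ r • (1 : A) := (self_le_norm_smul_one hb).trans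
    (smul_le_smul_of_nonneg_right hr zero_le_one)
  have h2 := star_left_conjugate_le_conjugate h1 p
  rw [hp.star_eq, hpb] at h2
  simpa [hpp] using h2

theorem bounds_of_absorbs_projection {m q : A} {γ : ℝ} (hm : IsSelfAdjoint m)
    (hq : IsSelfAdjoint q) (hqq : q * q = q) (hmq : m * q = q) (hqm : q * m = q)
    (hγ : ‖m - q‖ ≤ γ) :
    m - q ≤ γ • (1 - q) ∧ -(γ • (1 - q)) ≤ m - q := by
  have hp : IsSelfAdjoint (1 - q) := (IsSelfAdjoint.one A).sub hq
  have hpp : (1 - q) * (1 - q) = 1 - q := by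
    simp [mul_sub, sub_mul, hqq]
  have hpb : (1 - q) * (m - q) * (1 - q) = m - q := by
    simp [mul_sub, sub_mul, hqq, hmq, hqm]
  refine ⟨le_smul_of_conjugate_eq (hm.sub hq) hp hpp hpb hγ, ?_⟩
  have := le_smul_of_conjugate_eq (b := -(m - q)) (r := γ) (hm.sub hq).neg hp hpp
    (by rw [mul_neg, neg_mul, hpb]) (by rwa [norm_neg])
  exact neg_le.1 this

/-- The gap comparison in an arbitrary C⋆-algebra. -/
theorem norm_average_sub_le [Nontrivial A] {E : Type*} [Fintype E] [Nonempty E]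
    (P : A) (q m : E → A) (γ : ℝ)
    (hP : IsSelfAdjoint P) (hPP : P * P = P)
    (hq : ∀ e, IsSelfAdjoint (q e)) (hqq : ∀ e, q e * q e = q e)
    (hm : ∀ e, IsSelfAdjoint (m e))
    (hPq : ∀ e, P * q e = P ∧ q e * P = P)
    (hmq : ∀ e, m e * q e = q e ∧ q e * m e = q e)
    (hγ : ∀ e, ‖m e - q e‖ ≤ γ) (hγ1 : γ ≤ 1) :
    ‖(Fintype.card E : ℝ)⁻¹ • ∑ e, m e - P‖ ≤
      1 - (1 - γ) * (1 - ‖(Fintype.card E : ℝ)⁻¹ • ∑ e, q e - P‖) := by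
  have hn : (Fintype.card E : ℝ) ≠ 0 := by exact_mod_cast Fintype.card_ne_zero
  have hc : (0 : ℝ) ≤ (Fintype.card E : ℝ)⁻¹ := by positivity
  have hγ0 : 0 ≤ γ := (norm_nonneg _).trans (hγ (Classical.arbitrary E))
  have havg : ∀ x : A, (Fintype.card E : ℝ)⁻¹ • ∑ _e : E, x = x := fun x => by
    rw [Finset.sum_const, Finset.card_univ, ← Nat.cast_smul_eq_nsmul ℝ, smul_smul,
      inv_mul_cancel₀ hn, one_smul]
  have hmono : ∀ f g : E → A, (∀ e, f e ≤ g e) →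
      (Fintype.card E : ℝ)⁻¹ • ∑ e, f e ≤ (Fintype.card E : ℝ)⁻¹ • ∑ e, g e := fun f g h =>
    smul_le_smul_of_nonneg_left (Finset.sum_le_sum fun e _ => h e) hc
  have hsa : ∀ f : E → A, (∀ e, IsSelfAdjoint (f e)) →
      IsSelfAdjoint ((Fintype.card E : ℝ)⁻¹ • ∑ e, f e) := fun f h =>
    (IsSelfAdjoint.all _).smul (isSelfAdjoint_sum _ fun e _ => h e)
  have hb := fun e => bounds_of_absorbs_projection (hm e) (hq e) (hqq e) (hmq e).1 (hmq e).2 (hγ e)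
  have hP0 : 0 ≤ P := projection_nonneg hP hPP
  have hPle : ∀ e, P ≤ q e := fun e => sub_nonneg.1 <| projection_nonneg ((hq e).sub hP) <| by
    simp [mul_sub, sub_mul, hqq, hPP, (hPq e).1, (hPq e).2]
  have hup := hmono _ _ fun e => (hb e).1
  have hlow := hmono _ _ fun e => (hb e).2
  have hPQ := hmono _ _ hPle
  rw [havg] at hPQ
  simp only [Finset.sum_neg_distrib, ← Finset.smul_sum, Finset.sum_sub_distrib, smul_neg,
    smul_comm _ γ] at hup hlow
  simp only [smul_sub _ (∑ _, _) (∑ _, _), havg] at hup hlow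
  have hMsa := (hsa m hm).sub hP
  have hQsa := (hsa q hq).sub hP
  generalize (Fintype.card E : ℝ)⁻¹ • ∑ e, m e = M at *
  generalize (Fintype.card E : ℝ)⁻¹ • ∑ e, q e = Q at *
  have hr : 1 - (1 - γ) * (1 - ‖Q - P‖) = γ + (1 - γ) * ‖Q - P‖ := by ring
  rw [hr]
  have h1γ : 0 ≤ 1 - γ := sub_nonneg.2 hγ1
  have hγP : 0 ≤ γ • P := smul_nonneg hγ0 hP0
  refine norm_le_of_neg_le_of_le hMsa ?_ ?_
  · have hx : 0 ≤ ((1 - γ) * ‖Q - P‖) • (1 : A) :=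
      smul_nonneg (mul_nonneg h1γ (norm_nonneg _)) zero_le_one
    have hγQ : 0 ≤ γ • Q := smul_nonneg hγ0 (hP0.trans hPQ)
    have h := add_nonneg (add_nonneg (add_nonneg hx hγQ) (sub_nonneg.2 hPQ)) (sub_nonneg.2 hlow)
    refine sub_nonneg.1 (h.trans_eq ?_)
    module
  · have hQ := smul_le_smul_of_nonneg_left (self_le_norm_smul_one hQsa) h1γ
    have h := add_nonneg (add_nonneg hγP (sub_nonneg.2 hQ)) (sub_nonneg.2 hup)
    refine sub_nonneg.1 (h.trans_eq ?_)
    module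

end CStar

/-- Relating global and local gaps: let P and the q_e be orthogonal projections,
let the m_e be Hermitian contractions whose unit eigenspace contains the range of q_e
(m_e q_e = q_e m_e = q_e), with P q_e = q_e P = P, and let γ ≤ 1 bound all ‖m_e − q_e‖.
Then ‖(1/|E|) Σ_e m_e − P‖ ≤ 1 − (1 − γ)(1 − ‖(1/|E|) Σ_e q_e − P‖). -/
theorem local_vs_global_gap {D : ℕ} (hD : 1 ≤ D) {E : Type*} [Fintype E] [Nonempty E]
    (P : Matrix (Fin D) (Fin D) ℂ) (q m : E → Matrix (Fin D) (Fin D) ℂ) (γ : ℝ)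
    (hPherm : P.IsHermitian) (hPproj : P * P = P)
    (hqherm : ∀ e, (q e).IsHermitian) (hqproj : ∀ e, q e * q e = q e)
    (hmherm : ∀ e, (m e).IsHermitian) (hmnorm : ∀ e, matOpNorm (m e) ≤ 1)
    (hPq : ∀ e, P * q e = P ∧ q e * P = P)
    (hmq : ∀ e, m e * q e = q e ∧ q e * m e = q e)
    (hγ : ∀ e, matOpNorm (m e - q e) ≤ γ) (hγ1 : γ ≤ 1) :
    matOpNorm ((Fintype.card E : ℂ)⁻¹ • ∑ e, m e - P) ≤
      1 - (1 - γ) * (1 - matOpNorm ((Fintype.card E : ℂ)⁻¹ • ∑ e, q e - P)) := by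
  have : NeZero D := ⟨by omega⟩
  let T := Matrix.toEuclideanCLM (n := Fin D) (𝕜 := ℂ)
  have hsa : ∀ X : Matrix (Fin D) (Fin D) ℂ, X.IsHermitian → IsSelfAdjoint (T X) := fun X hX =>
    IsSelfAdjoint.map (show IsSelfAdjoint X from hX) T
  have hmul : ∀ {X Y Z : Matrix (Fin D) (Fin D) ℂ}, X * Y = Z → T X * T Y = T Z :=
    fun h => by rw [← map_mul, h]
  have key := norm_average_sub_le (T P) (fun e => T (q e)) (fun e => T (m e)) γ
    (hsa P hPherm) (hmul hPproj) (fun e => hsa _ (hqherm e)) (fun e => hmul (hqproj e))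
    (fun e => hsa _ (hmherm e)) (fun e => ⟨hmul (hPq e).1, hmul (hPq e).2⟩)
    (fun e => ⟨hmul (hmq e).1, hmul (hmq e).2⟩)
    (fun e => by rw [← map_sub]; exact hγ e) hγ1
  have hT : ∀ f : E → Matrix (Fin D) (Fin D) ℂ,
      matOpNorm ((Fintype.card E : ℂ)⁻¹ • ∑ e, f e - P) =
        ‖(Fintype.card E : ℝ)⁻¹ • ∑ e, T (f e) - T P‖ := fun f => by
    change ‖T _‖ = _
    rw [map_sub, map_smul, map_sum, show (Fintype.card E : ℂ)⁻¹ =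
      (((Fintype.card E : ℝ)⁻¹ : ℝ) : ℂ) by push_cast; rfl]
    rfl
  rw [hT, hT]
  exact key
end
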